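/- Let d = 2, let v̄ ∈ ℝ²∖{0} and Ū ∈ S₀^{2×2}. Then (v̄, Ū) ∈ Λ if and only if (Ūv̄)·v̄^⊥ = 0, where v̄^⊥ = (−v̄₂, v̄₁). Equivalently, (v̄, Ū) ∈ Λ if and only if v̄^⊥ is an eigenvector of Ū. -/

import Mathlib

open MeasureTheory

noncomputable section

/-- Vectors in ℝ^d. -/
abbrev Vec (d : ℕ) := Fin d → ℝ

/-- Matrices (as functions). -/
abbrev Mat (d : ℕ) := Fin d → Fin d → ℝ

/-- The space S₀^{d×d} of symmetric trace-free d×d matrices, as a submodule. -/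
def S0 (d : ℕ) : Submodule ℝ (Mat d) where
  carrier := {U | (∀ i j, U i j = U j i) ∧ ∑ i, U i i = 0}
  add_mem' := by
    rintro U V ⟨hU1, hU2⟩ ⟨hV1, hV2⟩
    refine ⟨fun i j => by simp [hU1 i j, hV1 i j], ?_⟩
    simp [Finset.sum_add_distrib, hU2, hV2]
  zero_mem' := ⟨fun i j => rfl, by simp⟩
  smul_mem' := by
    rintro c U ⟨hU1, hU2⟩
    refine ⟨fun i j => by simp [hU1 i j], ?_⟩
    simp [← Finset.mul_sum, hU2]

/-- Partial derivative ∂ᵢ of a scalar function. -/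
def pd {d : ℕ} (i : Fin d) (f : Vec d → ℝ) (x : Vec d) : ℝ :=
  fderiv ℝ f x (Pi.single i 1)

/-- The wave cone Λ: states `(v̄, Ū)` with `v̄ ≠ 0` for which there are `q̄ ∈ ℝ` and
`ξ ≠ 0` with `Ū ξ + q̄ ξ = 0` and `v̄ · ξ = 0`. -/
def Lam (d : ℕ) : Set (Vec d × S0 d) :=
  {w | w.1 ≠ 0 ∧ ∃ (q : ℝ) (ξ : Vec d), ξ ≠ 0 ∧
    (∀ i, (∑ j, (w.2 : Mat d) i j * ξ j) + q * ξ i = 0) ∧ (∑ i, w.1 i * ξ i = 0)}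

/-!
In the plane, the vectors orthogonal to `v ≠ 0` are exactly the multiples of `v^⊥`. Since `q` is
free, `Uξ + qξ = 0` says that `ξ` is an eigenvector of `U`, so `(v, U) ∈ Λ` says that `v^⊥` is one.
Applied to `U v^⊥`, the same fact shows that `v^⊥` is an eigenvector if and only if
`v · U v^⊥ = 0`, and symmetry of `U` moves it to the other factor.
-/

open Matrix

section WaveCone

variable {n K : Type*} [Fintype n] [CommRing K]

/-- The wave cone for arbitrary square matrices over a commutative ring `K`: the condition defining
`Lam`, with the matrix no longer required to be symmetric or trace-free. -/
def waveCone (n K : Type*) [Fintype n] [CommRing K] : Set ((n → K) × Matrix n n K) :=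
  {w | w.1 ≠ 0 ∧ ∃ (q : K) (ξ : n → K), ξ ≠ 0 ∧ w.2 *ᵥ ξ + q • ξ = 0 ∧ w.1 ⬝ᵥ ξ = 0}

theorem mem_waveCone_iff_exists_eigenvector {v : n → K} {U : Matrix n n K} (hv : v ≠ 0) :
    (v, U) ∈ waveCone n K ↔
      ∃ ξ : n → K, ξ ≠ 0 ∧ v ⬝ᵥ ξ = 0 ∧ ∃ μ : K, U *ᵥ ξ = μ • ξ := by
  constructor
  · rintro ⟨-, q, ξ, hξ, heq, horth⟩
    exact ⟨ξ, hξ, horth, -q, by rw [neg_smul]; exact eq_neg_of_add_eq_zero_left heq⟩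
  · rintro ⟨ξ, hξ, horth, μ, hμ⟩
    exact ⟨hv, -μ, ξ, hξ, by rw [hμ, neg_smul, add_neg_cancel], horth⟩

theorem mem_Lam_iff_mem_waveCone {d : ℕ} {v : Vec d} {U : S0 d} :
    (v, U) ∈ Lam d ↔ (v, of (U : Mat d)) ∈ waveCone (Fin d) ℝ :=
  and_congr_right fun _ => exists_congr fun _ => exists_congr fun _ =>
    and_congr_right fun _ => and_congr_left fun _ => funext_iff.symm

theorem isSymm_of_S0 {d : ℕ} (U : S0 d) : (of (U : Mat d)).IsSymm :=
  IsSymm.ext fun i j => U.2.1 j i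

theorem mulVec_dotProduct_of_isSymm {R : Type*} [CommSemiring R] {U : Matrix n n R} (hU : U.IsSymm)
    (v w : n → R) :
    (U *ᵥ v) ⬝ᵥ w = v ⬝ᵥ U *ᵥ w := by
  rw [dotProduct_mulVec, ← mulVec_transpose, hU.eq]

end WaveCone

section Plane

variable {K : Type*} [Field K] {v w : Fin 2 → K} {U : Matrix (Fin 2) (Fin 2) K}

/-- The vector `v^⊥ = (-v₂, v₁)`, whose coordinates are indexed from `0` here. Over `ℝ` it is `v`
turned by a right angle. -/
def perp {R : Type*} [Neg R] (v : Fin 2 → R) : Fin 2 → R :=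
  ![-(v 1), v 0]

theorem dotProduct_perp_self {R : Type*} [CommRing R] (v : Fin 2 → R) : v ⬝ᵥ perp v = 0 := by
  simp only [perp, vec2_dotProduct, cons_val_zero, cons_val_one]
  ring

theorem perp_ne_zero {R : Type*} [AddGroup R] {v : Fin 2 → R} (hv : v ≠ 0) : perp v ≠ 0 := by
  contrapose! hv
  simpa [perp, funext_iff, Fin.forall_fin_two, and_comm] using hv

theorem dotProduct_eq_zero_iff_exists_eq_smul_perp (hv : v ≠ 0) :
    v ⬝ᵥ w = 0 ↔ ∃ c : K, w = c • perp v := by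
  constructor
  · intro h
    rw [vec2_dotProduct] at h
    simp only [perp, smul_vec2, smul_eq_mul, funext_iff, Fin.forall_fin_two, cons_val_zero,
      cons_val_one]
    have hv' : v 0 ≠ 0 ∨ v 1 ≠ 0 := by
      simpa only [Function.ne_iff, Fin.exists_fin_two, Pi.zero_apply] using hv
    rcases hv' with h0 | h1
    · refine ⟨w 1 / v 0, ?_, (div_mul_cancel₀ _ h0).symm⟩
      field_simp
      linear_combination h
    · refine ⟨-w 0 / v 1, by field_simp, ?_⟩
      field_simp
      linear_combination h
  · rintro ⟨c, rfl⟩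
    rw [dotProduct_smul, dotProduct_perp_self, smul_zero]

theorem mem_waveCone_iff_exists_mulVec_perp_eq_smul (hv : v ≠ 0) :
    (v, U) ∈ waveCone (Fin 2) K ↔ ∃ μ : K, U *ᵥ perp v = μ • perp v := by
  rw [mem_waveCone_iff_exists_eigenvector hv]
  constructor
  · rintro ⟨ξ, hξ, horth, μ, hμ⟩
    obtain ⟨c, rfl⟩ := (dotProduct_eq_zero_iff_exists_eq_smul_perp hv).mp horth
    have hc : c ≠ 0 := (smul_ne_zero_iff.mp hξ).1
    rw [mulVec_smul, smul_comm μ c] at hμ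
    exact ⟨μ, smul_right_injective _ hc hμ⟩
  · exact fun h => ⟨perp v, perp_ne_zero hv, dotProduct_perp_self v, h⟩

theorem stmt14_general (hv : v ≠ 0) (hU : U.IsSymm) :
    ((v, U) ∈ waveCone (Fin 2) K ↔ (U *ᵥ v) ⬝ᵥ perp v = 0) ∧
    ((v, U) ∈ waveCone (Fin 2) K ↔ ∃ μ : K, U *ᵥ perp v = μ • perp v) := by
  have eigenvector_iff := mem_waveCone_iff_exists_mulVec_perp_eq_smul (U := U) hv
  refine ⟨?_, eigenvector_iff⟩
  rw [eigenvector_iff, mulVec_dotProduct_of_isSymm hU,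
    dotProduct_eq_zero_iff_exists_eq_smul_perp hv]

end Plane

/-- Let `d = 2`, `v̄ ∈ ℝ²∖{0}`, `Ū ∈ S₀^{2×2}`. Then `(v̄, Ū) ∈ Λ`
iff `(Ū v̄) · v̄^⊥ = 0` where `v̄^⊥ = (−v̄₂, v̄₁)`; equivalently, iff `v̄^⊥` is an
eigenvector of `Ū`. -/
theorem stmt14 (v : Vec 2) (hv : v ≠ 0) (U : S0 2) :
    ((v, U) ∈ Lam 2 ↔
      (∑ i, (∑ j, (U : Mat 2) i j * v j) * (![-(v 1), v 0]) i = 0)) ∧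
    ((v, U) ∈ Lam 2 ↔
      (∃ μ : ℝ, (fun i => ∑ j, (U : Mat 2) i j * (![-(v 1), v 0]) j)
        = μ • ![-(v 1), v 0])) := by
  rw [mem_Lam_iff_mem_waveCone]
  exact stmt14_general hv (isSymm_of_S0 U)
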